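/- Let W be the Lie algebra of ℂ-linear derivations of ℂ[x,x⁻¹], with basis d_n (n ∈ ℤ) given by d_n(x) = −x^{n+1}, so that [d_m,d_n] = (m−n)d_{m+n}. Let c : W × W → ℂ be a bilinear map that is alternating (c(X,X) = 0 for all X) and satisfies the 2-cocycle condition c([X,Y],Z) + c([Y,Z],X) + c([Z,X],Y) = 0 for all X,Y,Z ∈ W. Then there exist a constant α ∈ ℂ and a ℂ-linear map f : W → ℂ such that c(d_m, d_n) = α·δ_{m+n,0}·(m³−m) + f([d_m,d_n]) for all m,n ∈ ℤ. In other words, every 2-cocycle on the centerless Virasoro algebra is, up to a coboundary, a scalar multiple of the Virasoro cocycle, so the Virasoro algebra is the unique nontrivial one-dimensional central extension of W up to equivalence and rescaling. -/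

import Mathlib

open LaurentPolynomial

theorem vir_der_T (D : Derivation ℂ (LaurentPolynomial ℂ) (LaurentPolynomial ℂ)) (n : ℤ) :
    D (T n) = (n : ℂ) • (T (n - 1) * D (T 1)) := by
  have step : ∀ k : ℤ, D (T (k + 1)) = T k * D (T 1) + T 1 * D (T k) := by
    intro k
    rw [T_add, D.leibniz, smul_eq_mul, smul_eq_mul]
  induction n using Int.induction_on with
  | zero =>
    have h : D (T 0) = 0 := by rw [T_zero]; exact D.map_one_eq_zero
    rw [h]; simp
  | succ k ih =>
    rw [step, ih, mul_smul_comm, ← mul_assoc, ← T_add]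
    have e1 : (1 : ℤ) + (k - 1) = k := by ring
    have e2 : (k : ℤ) + 1 - 1 = k := by ring
    rw [e1, e2]
    push_cast
    rw [add_smul, one_smul, add_comm]
  | pred k ih =>
    have h := step (-(k : ℤ) - 1)
    have e1 : -(k : ℤ) - 1 + 1 = -k := by ring
    rw [e1, ih] at h
    have h2 : T 1 * D (T (-(k : ℤ) - 1)) =
        ((-(k : ℤ) - 1 : ℤ) : ℂ) • (T (-(k : ℤ) - 1) * D (T 1)) := by
      rw [← sub_eq_iff_eq_add'.mpr h]
      push_cast
      rw [sub_smul (-(k : ℂ)), one_smul]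
    have h3 : T (-1) * (T 1 * D (T (-(k : ℤ) - 1))) = D (T (-(k : ℤ) - 1)) := by
      rw [← mul_assoc, ← T_add]
      simp
    rw [← h3, h2, mul_smul_comm, ← mul_assoc, ← T_add]
    have e5 : (-1 : ℤ) + (-(k : ℤ) - 1) = -(k : ℤ) - 1 - 1 := by ring
    rw [e5]

theorem vir_der_ext (D E : Derivation ℂ (LaurentPolynomial ℂ) (LaurentPolynomial ℂ))
    (h : D (T 1) = E (T 1)) : D = E := by
  refine Derivation.ext fun p => ?_
  induction p using LaurentPolynomial.induction_on' with
  | add p q hp hq => rw [map_add, map_add, hp, hq]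
  | C_mul_T n a =>
    rw [← smul_eq_C_mul, D.map_smul, E.map_smul, vir_der_T D, vir_der_T E, h]

theorem vir_bracket (d : ℤ → Derivation ℂ (LaurentPolynomial ℂ) (LaurentPolynomial ℂ))
    (hd : ∀ n : ℤ, d n (T 1) = -T (n + 1)) (m n : ℤ) :
    ⁅d m, d n⁆ = ((m : ℂ) - n) • d (m + n) := by
  apply vir_der_ext
  rw [Derivation.commutator_apply, Derivation.smul_apply, hd, hd, hd, map_neg, map_neg,
    vir_der_T (d m), vir_der_T (d n), hd, hd, mul_neg, mul_neg, ← T_add, ← T_add]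
  have e1 : n + 1 - 1 + (m + 1) = m + n + 1 := by ring
  have e2 : m + 1 - 1 + (n + 1) = m + n + 1 := by ring
  rw [e1, e2]
  push_cast
  module

theorem vir_functional (a : ℤ → ℂ) :
    ∃ f : Derivation ℂ (LaurentPolynomial ℂ) (LaurentPolynomial ℂ) →ₗ[ℂ] ℂ,
      ∀ D k, D (T 1) = -T (k + 1) → f D = a k := by
  obtain ⟨g, hg⟩ : ∃ g : LaurentPolynomial ℂ →ₗ[ℂ] ℂ, ∀ k, g (T k) = - a (k - 1) := by
    refine ⟨(Finsupp.lsum ℂ (fun k : ℤ => LinearMap.toSpanSingleton ℂ ℂ (-a (k - 1)))) ∘ₗ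
      (AddMonoidAlgebra.coeffLinearEquiv ℂ).toLinearMap, fun k => ?_⟩
    have e : AddMonoidAlgebra.coeffLinearEquiv ℂ (T k : LaurentPolynomial ℂ) =
      Finsupp.single k (1 : ℂ) := rfl
    rw [LinearMap.comp_apply, LinearEquiv.coe_coe, e, Finsupp.lsum_single]
    simp
  refine ⟨{ toFun := fun D => g (D (T 1)), map_add' := ?_, map_smul' := ?_ }, ?_⟩
  · intro x y; simp
  · intro r x; simp
  · intro D k h
    simp [h, hg]

theorem vir_scalar (b : ℤ → ℤ → ℂ) (hs : ∀ m n, b m n = - b n m)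
    (hc : ∀ m n p : ℤ, ((m : ℂ) - n) * b (m + n) p + ((n : ℂ) - p) * b (n + p) m
      + ((p : ℂ) - m) * b (p + m) n = 0)
    (h0 : ∀ k, b 0 k = 0) (h1 : b 1 (-1) = 0) (m n : ℤ) :
    b m n = b 2 (-2) / 6 * (if m + n = 0 then 1 else 0) * ((m : ℂ) ^ 3 - (m : ℂ)) := by
  split_ifs with h
  · obtain rfl : n = -m := by omega
    have key : ∀ k : ℕ, b (k + 2 : ℤ) (-(k + 2 : ℤ)) =
        b 2 (-2) / 6 * (((k : ℂ) + 2) ^ 3 - ((k : ℂ) + 2)) := by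
      intro k
      induction k with
      | zero => norm_num
      | succ k ih =>
        have := hc (k + 2) 1 (-(k + 3))
        have e1 : (1 : ℤ) + -(k + 3) = -(k + 2) := by ring
        have e2 : -((k : ℤ) + 3) + (k + 2) = -1 := by ring
        have e3 : (k : ℤ) + 2 + 1 = k + 3 := by ring
        rw [e1, e2, e3, hs (-1) 1, h1, hs (-(k + 2 : ℤ)), ih] at this
        have e4 : ((k + 1 : ℕ) : ℤ) + 2 = k + 3 := by push_cast; ring
        rw [e4]
        have hk : (k : ℂ) + 1 ≠ 0 := by exact_mod_cast Nat.succ_ne_zero k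
        apply mul_left_cancel₀ hk
        push_cast at this ⊢
        linear_combination this
    have pos : ∀ k : ℕ, b (k : ℤ) (-(k : ℤ)) = b 2 (-2) / 6 * ((k : ℂ) ^ 3 - (k : ℂ)) := by
      intro k
      match k with
      | 0 => simp [h0]
      | 1 => simp [h1]
      | k + 2 => simpa using key k
    obtain ⟨k, rfl | rfl⟩ := m.eq_nat_or_neg
    · rw [pos]; push_cast; ring
    · rw [hs, neg_neg, pos]; push_cast; ring
  · have := hc 0 m n
    rw [zero_add, add_zero, hs (m + n) 0, h0, hs n m] at this
    have hmn : (m : ℂ) + n ≠ 0 := by exact_mod_cast h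
    have : ((m : ℂ) + n) * b m n = 0 := by
      push_cast at this
      linear_combination -this
    simpa [hmn] using this

/-- Every 2-cocycle on the centerless Virasoro (Witt) algebra of derivations of
`ℂ[x,x⁻¹]` is, up to a coboundary, a scalar multiple of the Virasoro cocycle. -/
theorem virasoro_cocycle_classification
    (d : ℤ → Derivation ℂ (LaurentPolynomial ℂ) (LaurentPolynomial ℂ))
    (hd : ∀ n : ℤ, d n (T 1) = -T (n + 1))
    (c : Derivation ℂ (LaurentPolynomial ℂ) (LaurentPolynomial ℂ) →ₗ[ℂ]
         Derivation ℂ (LaurentPolynomial ℂ) (LaurentPolynomial ℂ) →ₗ[ℂ] ℂ)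
    (halt : ∀ X, c X X = 0)
    (hcoc : ∀ X Y Z, c ⁅X, Y⁆ Z + c ⁅Y, Z⁆ X + c ⁅Z, X⁆ Y = 0) :
    ∃ (α : ℂ) (f : Derivation ℂ (LaurentPolynomial ℂ) (LaurentPolynomial ℂ) →ₗ[ℂ] ℂ),
      ∀ m n : ℤ, c (d m) (d n) =
        α * (if m + n = 0 then 1 else 0) * ((m : ℂ) ^ 3 - (m : ℂ)) + f ⁅d m, d n⁆ := by
  have hskew : ∀ X Y, c X Y = - c Y X := by
    intro X Y
    have h := halt (X + Y)
    simp only [map_add, LinearMap.add_apply, halt] at h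
    linear_combination h
  let a : ℤ → ℂ := fun k => if k = 0 then c (d 1) (d (-1)) / 2 else - c (d 0) (d k) / k
  obtain ⟨f, hf⟩ := vir_functional a
  have hfd : ∀ k, f (d k) = a k := fun k => hf _ _ (hd k)
  let b : ℤ → ℤ → ℂ := fun m n => c (d m) (d n) - ((m : ℂ) - n) * a (m + n)
  have hb := vir_scalar b ?_ ?_ ?_ ?_
  · refine ⟨b 2 (-2) / 6, f, fun m n => ?_⟩
    rw [vir_bracket d hd, map_smul, hfd, ← hb, smul_eq_mul]
    simp only [b]
    ring
  · intro m n
    simp only [b]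
    rw [hskew (d m), add_comm m n]
    ring
  · intro m n p
    have h := hcoc (d m) (d n) (d p)
    simp only [vir_bracket d hd, map_smul, LinearMap.smul_apply, smul_eq_mul] at h
    simp only [b]
    have e1 : n + p + m = m + n + p := by ring
    have e2 : p + m + n = m + n + p := by ring
    rw [e1, e2]
    push_cast
    linear_combination h
  · intro k
    simp only [b, a, zero_add]
    split_ifs with hk
    · subst hk; simp [halt]
    · have : (k : ℂ) ≠ 0 := by exact_mod_cast hk
      field_simp
      push_cast
      ring
  · simp only [b, a]
    norm_num
    ring
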